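/- arXiv:1207.1239 — 4 statements merged into one kernel-verified Lean document; each statement's English description precedes it below -/
import Mathlib

section
/- The incidence graph of points and lines of ℙ²(𝔽₄) contains no induced subgraph isomorphic to the extended Dynkin diagram D̃₂₀. -/
/-- The field with four elements. -/
abbrev F4 : Type := GaloisField 2 2

/-- The vector space `𝔽₄³`. -/
abbrev V3 : Type := Fin 3 → F4

/-- Points of `ℙ²(𝔽₄)`: 1-dimensional linear subspaces of `𝔽₄³`. -/
abbrev ProjPoint : Type := {P : Submodule F4 V3 // Module.finrank F4 P = 1}

/-- Lines of `ℙ²(𝔽₄)`: 2-dimensional linear subspaces of `𝔽₄³`. -/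
abbrev ProjLine : Type := {L : Submodule F4 V3 // Module.finrank F4 L = 2}

/-- The incidence relation: a point is adjacent to a line iff the point lies on the line. -/
def IncAdj : ProjPoint ⊕ ProjLine → ProjPoint ⊕ ProjLine → Prop
  | Sum.inl p, Sum.inr l => p.1 ≤ l.1
  | Sum.inr l, Sum.inl p => p.1 ≤ l.1
  | _, _ => False

/-- The incidence graph of points and lines of `ℙ²(𝔽₄)`. -/
def IncGraph : SimpleGraph (ProjPoint ⊕ ProjLine) where
  Adj := IncAdj
  symm := ⟨by rintro (p | l) (q | m) h <;> first | exact h.elim | exact h⟩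
  loopless := ⟨by rintro (p | l) h <;> exact h.elim⟩

/-- The (oriented) edges of the extended Dynkin diagram `D̃ₙ` on `{0, 1, …, n}`:
`{0,2}`, `{1,2}`, `{i,i+1}` for `2 ≤ i ≤ n-3`, `{n-2,n-1}` and `{n-2,n}`. -/
def DTAdj (n : ℕ) (a b : ℕ) : Prop :=
  (a = 0 ∧ b = 2) ∨ (a = 1 ∧ b = 2) ∨ (2 ≤ a ∧ a ≤ n - 3 ∧ b = a + 1) ∨
    (a = n - 2 ∧ b = n - 1) ∨ (a = n - 2 ∧ b = n)

/-- The extended Dynkin diagram `D̃ₙ` as a simple graph on `n + 1` vertices.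
(For `n ≥ 4` the vertices occurring in `DTAdj` are always distinct, so the
`a ≠ b` conjunct is redundant; it merely makes the graph loopless for all `n`.) -/
def DTilde (n : ℕ) : SimpleGraph (Fin (n + 1)) where
  Adj a b := a ≠ b ∧ (DTAdj n a.1 b.1 ∨ DTAdj n b.1 a.1)
  symm := ⟨fun _ _ h => ⟨h.1.symm, h.2.symm⟩⟩
  loopless := ⟨fun _ h => h.1 rfl⟩

/-- A simple graph `G` contains an induced subgraph isomorphic to `H` if there is an
injective map on vertices transporting adjacency in `H` exactly to adjacency in `G`. -/
def HasInducedCopy {α β : Type*} (H : SimpleGraph α) (G : SimpleGraph β) : Prop :=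
  ∃ f : α → β, Function.Injective f ∧ ∀ a b : α, G.Adj (f a) (f b) ↔ H.Adj a b

/-!
In the incidence graph of a projective plane, two distinct vertices of the same colour (two points
or two lines) have exactly one common neighbour. Suppose `D̃ₙ` with `n` even is an induced subgraph.
Its branch vertices `x = 2` and `y = n - 2` have the same colour, hence a common neighbour `z`,
which lies outside the diagram. Of the five neighbours of `x`, three belong to the diagram and one
is `z`, so a single neighbour `u` is left; likewise a single `v` is left at `y`. A spine vertex
`s ∈ {6, 8, …, n - 6}` has no common neighbour with `x` or `y` inside the diagram, so it is adjacent
to `z` or to both `u` and `v`. As `u` and `v` have only one common neighbour, at most one such `s`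
is not adjacent to `z`, and together with `x` and `y` this gives `z` too many neighbours.
If degrees up to `k + 4` are allowed, then `k` neighbours are left at `x` and at `y`, and there are
at most `k²` exceptional `s`.
-/

open Module SimpleGraph

section CommonNeighbors

variable {V W : Type*} {G : SimpleGraph V} {H : SimpleGraph W} {c : G.Coloring Bool}

/-- The projective plane axioms for a bipartite graph with colour classes given by `c`, one class
being the points and the other the lines: two distinct points lie on exactly one common line, and
two distinct lines meet in exactly one point. Nondegeneracy is not required. -/
def HasUniqueCommonNeighbors (c : G.Coloring Bool) : Prop :=
  ∀ ⦃u v : V⦄, u ≠ v → c u = c v → ∃! w, w ∈ G.commonNeighbors u v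

lemma color_eq_of_mem_commonNeighbors (c : G.Coloring Bool) {u v w : V}
    (h : w ∈ G.commonNeighbors u v) : c u = c v :=
  (Bool.eq_not_of_ne (c.valid h.1)).trans (Bool.eq_not_of_ne (c.valid h.2)).symm

namespace HasUniqueCommonNeighbors

lemma eq_of_mem_commonNeighbors (hc : HasUniqueCommonNeighbors c) {u v w w' : V} (huv : u ≠ v)
    (hw : w ∈ G.commonNeighbors u v) (hw' : w' ∈ G.commonNeighbors u v) : w = w' :=
  (hc huv (color_eq_of_mem_commonNeighbors c hw)).unique hw hw'

lemma card_le_mul_of_not_adj (hc : HasUniqueCommonNeighbors c) {x y z : V} (hxy : x ≠ y)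
    (hz : z ∈ G.commonNeighbors x y) {S X Y : Finset V} (hSz : ∀ s ∈ S, ¬ G.Adj s z)
    (hX : ∀ s ∈ S, ∃ u ∈ X, u ∈ G.commonNeighbors x s)
    (hY : ∀ s ∈ S, ∃ v ∈ Y, v ∈ G.commonNeighbors y s) :
    S.card ≤ X.card * Y.card := by
  choose! u huX hu using hX
  choose! v hvY hv using hY
  rw [← Finset.card_product]
  refine Finset.card_le_card_of_injOn (fun s => (u s, v s))
    (fun s hs => Finset.mem_product.2 ⟨huX s hs, hvY s hs⟩) fun s hs t ht hst => ?_
  obtain ⟨hut, hvt⟩ : u s = u t ∧ v s = v t := Prod.mk.inj hst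
  have huv : u s ≠ v s := fun h => by
    have huz : u s = z := hc.eq_of_mem_commonNeighbors hxy ⟨(hu s hs).1, h ▸ (hv s hs).1⟩ hz
    exact hSz s hs (huz ▸ (hu s hs).2)
  exact hc.eq_of_mem_commonNeighbors huv ⟨(hu s hs).2.symm, (hv s hs).2.symm⟩
    ⟨hut ▸ (hu t ht).2.symm, hvt ▸ (hv t ht).2.symm⟩

end HasUniqueCommonNeighbors

lemma notMem_map_neighborFinset_of_commonNeighbors_eq_empty [H.LocallyFinite] (f : H ↪g G)
    {a t : W} {w : V} (hat : H.commonNeighbors a t = ∅) (hw : G.Adj (f t) w) :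
    w ∉ (H.neighborFinset a).map f.toEmbedding := by
  simp only [Finset.mem_map, mem_neighborFinset, not_exists, not_and]
  rintro b hab rfl
  exact Set.eq_empty_iff_forall_notMem.1 hat b ⟨hab, f.map_adj_iff.1 hw⟩

lemma card_add_two_le_degree [G.LocallyFinite] (f : H ↪g G) {z : V} {a b : W} {T : Finset W}
    (hab : a ≠ b) (ha : a ∉ T) (hb : b ∉ T) (hz : z ∈ G.commonNeighbors (f a) (f b))
    (hTz : ∀ t ∈ T, G.Adj (f t) z) : T.card + 2 ≤ G.degree z := by
  classical
  have hcard : (insert a (insert b T)).card = T.card + 2 := by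
    rw [Finset.card_insert_of_notMem (by simp [hab, ha]), Finset.card_insert_of_notMem hb]
  rw [← hcard, ← Finset.card_map f.toEmbedding, ← card_neighborFinset_eq_degree]
  refine Finset.card_le_card fun w hw => ?_
  obtain ⟨t, ht, rfl⟩ := Finset.mem_map.1 hw
  rw [mem_neighborFinset]
  rcases Finset.mem_insert.1 ht with rfl | ht
  · exact hz.1.symm
  rcases Finset.mem_insert.1 ht with rfl | ht
  · exact hz.2.symm
  · exact (hTz t ht).symm

variable [G.LocallyFinite] [H.LocallyFinite]

/-- The neighbours of `f a` that are neither images of neighbours of `a` nor equal to `z`. -/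
def freeNeighbors [DecidableEq V] (f : H ↪g G) (z : V) (a : W) : Finset V :=
  (G.neighborFinset (f a) \ (H.neighborFinset a).map f.toEmbedding).erase z

lemma card_freeNeighbors_add [DecidableEq V] (f : H ↪g G) {z : V} {a b : W}
    (hab : H.commonNeighbors a b = ∅) (hz : z ∈ G.commonNeighbors (f a) (f b)) :
    (freeNeighbors f z a).card + (H.degree a + 1) = G.degree (f a) := by
  have hsub : (H.neighborFinset a).map f.toEmbedding ⊆ G.neighborFinset (f a) := by
    simp only [Finset.subset_iff, Finset.mem_map, mem_neighborFinset]
    rintro _ ⟨w, haw, rfl⟩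
    exact f.map_adj_iff.2 haw
  have hz_mem : z ∈ G.neighborFinset (f a) \ (H.neighborFinset a).map f.toEmbedding :=
    Finset.mem_sdiff.2 ⟨(mem_neighborFinset ..).2 hz.1,
      notMem_map_neighborFinset_of_commonNeighbors_eq_empty f hab hz.2⟩
  have herase := Finset.card_erase_add_one hz_mem
  have hsdiff := Finset.card_sdiff_add_card_eq_card hsub
  rw [Finset.card_map, card_neighborFinset_eq_degree, card_neighborFinset_eq_degree] at hsdiff
  rw [freeNeighbors]
  omega

lemma HasUniqueCommonNeighbors.exists_mem_freeNeighbors [DecidableEq V]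
    (hc : HasUniqueCommonNeighbors c) (f : H ↪g G) {z : V} {a t : W} (hne : a ≠ t)
    (hcolor : c (f a) = c (f t)) (hat : H.commonNeighbors a t = ∅) (hz : ¬ G.Adj (f t) z) :
    ∃ u ∈ freeNeighbors f z a, u ∈ G.commonNeighbors (f a) (f t) := by
  obtain ⟨u, hu, -⟩ := hc (f.injective.ne hne) hcolor
  refine ⟨u, Finset.mem_erase.2 ⟨fun h => hz (h ▸ hu.2), Finset.mem_sdiff.2 ⟨?_, ?_⟩⟩, hu⟩
  · exact (mem_neighborFinset ..).2 hu.1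
  · exact notMem_map_neighborFinset_of_commonNeighbors_eq_empty f hat hu.2

theorem HasUniqueCommonNeighbors.card_add_two_le (hc : HasUniqueCommonNeighbors c) (f : H ↪g G)
    {a b : W} {T : Finset W} {d k l : ℕ} (hab : a ≠ b) (hcolor : c (f a) = c (f b))
    (hab_empty : H.commonNeighbors a b = ∅) (ha : a ∉ T) (hb : b ∉ T)
    (hT : ∀ t ∈ T, c (f a) = c (f t) ∧ H.commonNeighbors a t = ∅ ∧ H.commonNeighbors b t = ∅)
    (hdeg : ∀ v, G.degree v ≤ d) (hdeg_a : G.degree (f a) ≤ k + (H.degree a + 1))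
    (hdeg_b : G.degree (f b) ≤ l + (H.degree b + 1)) : T.card + 2 ≤ d + k * l := by
  classical
  obtain ⟨z, hz, -⟩ := hc (f.injective.ne hab) hcolor
  have hk : (freeNeighbors f z a).card ≤ k := by
    have := card_freeNeighbors_add f hab_empty hz
    omega
  have hl : (freeNeighbors f z b).card ≤ l := by
    have := card_freeNeighbors_add f (commonNeighbors_symm H a b ▸ hab_empty)
      (commonNeighbors_symm G _ _ ▸ hz)
    omega
  have hadj : (T.filter fun t => G.Adj (f t) z).card + 2 ≤ d :=
    (card_add_two_le_degree f hab (by simp [ha]) (by simp [hb]) hz (by simp)).trans (hdeg z)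
  have hnot_adj : (T.filter fun t => ¬ G.Adj (f t) z).card ≤ k * l := by
    rw [← Finset.card_map f.toEmbedding]
    refine (hc.card_le_mul_of_not_adj (f.injective.ne hab) hz ?_ ?_ ?_).trans (Nat.mul_le_mul hk hl)
    all_goals
      simp only [Finset.mem_map, Finset.mem_filter]
      rintro _ ⟨t, ⟨ht, htz⟩, rfl⟩
      obtain ⟨hcolor_t, hat, hbt⟩ := hT t ht
    · exact htz
    · exact hc.exists_mem_freeNeighbors f (ne_of_mem_of_not_mem ht ha).symm hcolor_t hat htz
    · exact hc.exists_mem_freeNeighbors f (ne_of_mem_of_not_mem ht hb).symm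
        (hcolor.symm.trans hcolor_t) hbt htz
  have := T.card_filter_add_card_filter_not fun t => G.Adj (f t) z
  omega

end CommonNeighbors

section DTilde

variable {n : ℕ}

lemma dTilde_adj_iff {a b : Fin (n + 1)} : (DTilde n).Adj a b ↔
    a.val ≠ b.val ∧ (DTAdj n a.val b.val ∨ DTAdj n b.val a.val) :=
  and_congr_left' Fin.ext_iff.not

lemma dTilde_adj_succ {i : ℕ} (hi : 2 ≤ i) (hin : i + 3 ≤ n) :
    (DTilde n).Adj ⟨i, by omega⟩ ⟨i + 1, by omega⟩ := by
  grind [dTilde_adj_iff, DTAdj]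

lemma dTilde_commonNeighbors_eq_empty {a b : Fin (n + 1)} (ha : 2 ≤ a.val)
    (hab : a.val + 4 ≤ b.val) (hb : b.val + 2 ≤ n) : (DTilde n).commonNeighbors a b = ∅ := by
  refine Set.eq_empty_iff_forall_notMem.2 fun w hw => ?_
  rw [mem_commonNeighbors, dTilde_adj_iff, dTilde_adj_iff, DTAdj, DTAdj, DTAdj, DTAdj] at hw
  omega

lemma three_le_dTilde_degree_left (hn : 5 ≤ n) {a : Fin (n + 1)} (ha : a.val = 2)
    [Fintype ((DTilde n).neighborSet a)] : 3 ≤ (DTilde n).degree a := by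
  rw [← card_neighborFinset_eq_degree]
  refine Finset.two_lt_card.2
    ⟨⟨0, by omega⟩, ?_, ⟨1, by omega⟩, ?_, ⟨3, by omega⟩, ?_, by simp⟩ <;>
  grind [mem_neighborFinset, dTilde_adj_iff, DTAdj]

lemma three_le_dTilde_degree_right (hn : 5 ≤ n) {a : Fin (n + 1)} (ha : a.val + 2 = n)
    [Fintype ((DTilde n).neighborSet a)] : 3 ≤ (DTilde n).degree a := by
  rw [← card_neighborFinset_eq_degree]
  refine Finset.two_lt_card.2
    ⟨⟨n - 3, by omega⟩, ?_, ⟨n - 1, by omega⟩, ?_, ⟨n, by omega⟩, ?_, by grind⟩ <;>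
  grind [mem_neighborFinset, dTilde_adj_iff, DTAdj]

lemma dTilde_color_eq_of_even (c : (DTilde n).Coloring Bool) {i : ℕ} (hi : 2 ≤ i)
    (heven : Even i) (hin : i + 2 ≤ n) : c ⟨2, by omega⟩ = c ⟨i, by omega⟩ := by
  obtain ⟨j, rfl⟩ : ∃ j, i = 2 + 2 * j := ⟨i / 2 - 1, by grind⟩
  induction j with
  | zero => rfl
  | succ j ih =>
    exact (ih (by omega) (by grind) (by omega)).trans <| color_eq_of_mem_commonNeighbors c
      ⟨dTilde_adj_succ (i := 2 + 2 * j) (by omega) (by omega),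
        (dTilde_adj_succ (i := 2 + 2 * j + 1) (by omega) (by omega)).symm⟩

/-- The spine vertices `6, 8, …` of `D̃ₙ` up to `n - 6`: for even `n` these are the vertices of the
same colour as the branch vertices `2` and `n - 2` having no common neighbour with either. -/
def evenMidSpine (n : ℕ) : Finset (Fin (n + 1)) :=
  {i | Even i.val ∧ 6 ≤ i.val ∧ i.val + 6 ≤ n}

lemma mem_evenMidSpine {i : Fin (n + 1)} :
    i ∈ evenMidSpine n ↔ Even i.val ∧ 6 ≤ i.val ∧ i.val + 6 ≤ n := by
  simp [evenMidSpine]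

lemma le_card_evenMidSpine (n : ℕ) : n / 2 - 5 ≤ (evenMidSpine n).card := by
  have hval : ∀ j < n / 2 - 5, (Fin.ofNat (n + 1) (2 * j + 6)).val = 2 * j + 6 := fun j hj =>
    Nat.mod_eq_of_lt (by omega)
  refine Finset.le_card_of_inj_on_range (fun j => Fin.ofNat (n + 1) (2 * j + 6)) ?_ ?_
  · intro j hj
    rw [mem_evenMidSpine, hval j hj]
    grind
  · intro i hi j hj hij
    have := congrArg Fin.val hij
    rw [hval i hi, hval j hj] at this
    omega

end DTilde

section Subspaces

variable {K V : Type*} [Field K] [AddCommGroup V] [Module K V]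

lemma finrank_inf_lt_of_finrank_eq {p q : Submodule K V} [FiniteDimensional K p]
    [FiniteDimensional K q] (h : finrank K p = finrank K q) (hne : p ≠ q) :
    finrank K ↥(p ⊓ q) < finrank K p :=
  Submodule.finrank_lt_finrank_of_lt <| inf_le_left.lt_of_ne fun hinf =>
    hne (Submodule.eq_of_le_of_finrank_eq (inf_eq_left.1 hinf) h)

lemma finrank_sup_eq_two {p q : Submodule K V} (hp : finrank K p = 1) (hq : finrank K q = 1)
    (hne : p ≠ q) : finrank K ↥(p ⊔ q) = 2 := by
  have := FiniteDimensional.of_finrank_pos (hp ▸ one_pos)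
  have := FiniteDimensional.of_finrank_pos (hq ▸ one_pos)
  have hlt := finrank_inf_lt_of_finrank_eq (hp.trans hq.symm) hne
  have hadd := Submodule.finrank_sup_add_finrank_inf_eq p q
  omega

lemma finrank_inf_eq_one (hV : finrank K V = 3) {l m : Submodule K V} (hl : finrank K l = 2)
    (hm : finrank K m = 2) (hne : l ≠ m) : finrank K ↥(l ⊓ m) = 1 := by
  have := FiniteDimensional.of_finrank_pos (hV ▸ three_pos)
  have hlt := finrank_inf_lt_of_finrank_eq (hl.trans hm.symm) hne
  have hadd := Submodule.finrank_sup_add_finrank_inf_eq l m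
  have hle := Submodule.finrank_le (l ⊔ m)
  omega

variable [Finite K]

lemma ncard_finrank_eq_one (hV : finrank K V = 2) :
    {p : Submodule K V | finrank K p = 1}.ncard = Nat.card K + 1 := by
  rw [← Projectivization.card_of_finrank_two K V hV, ← Nat.card_coe_set_eq]
  exact Nat.card_congr (Projectivization.equivSubmodule K V).symm

lemma ncard_finrank_eq_one_le {l : Submodule K V} (hl : finrank K l = 2) :
    {p : Submodule K V | finrank K p = 1 ∧ p ≤ l}.ncard = Nat.card K + 1 := by
  rw [← ncard_finrank_eq_one hl,
    ← Set.ncard_image_of_injective _ (Submodule.map_injective_of_injective l.injective_subtype)]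
  congr 1
  ext p
  constructor
  · rintro ⟨hp, hpl⟩
    exact ⟨p.submoduleOf l, (Submodule.submoduleOfEquivOfLe hpl).finrank_eq.trans hp,
      (Submodule.map_comap_subtype l p).trans (inf_eq_right.2 hpl)⟩
  · rintro ⟨q, hq, rfl⟩
    exact ⟨(Submodule.finrank_map_subtype_eq l q).trans hq, Submodule.map_subtype_le l q⟩

lemma ncard_finrank_eq_two_ge (hV : finrank K V = 3) {p : Submodule K V} (hp : finrank K p = 1) :
    {l : Submodule K V | finrank K l = 2 ∧ p ≤ l}.ncard = Nat.card K + 1 := by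
  have := FiniteDimensional.of_finrank_pos (hV ▸ three_pos)
  obtain ⟨m, hpm⟩ := p.exists_isCompl
  have hm : finrank K m = 2 := by
    have := Submodule.finrank_add_eq_of_isCompl hpm
    omega
  have hsup_inf {q : Submodule K V} (hq : q ≤ m) : (q ⊔ p) ⊓ m = q := by
    rw [sup_inf_assoc_of_le p hq, hpm.inf_eq_bot, sup_bot_eq]
  have hp_le {q : Submodule K V} (hpq : p ≤ q) (hqm : q ≤ m) : False := by
    rw [hpm.disjoint.eq_bot_of_le (hpq.trans hqm), finrank_bot] at hp
    exact zero_ne_one hp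
  have hinj : Set.InjOn (· ⊔ p) {q : Submodule K V | finrank K q = 1 ∧ q ≤ m} :=
    Set.LeftInvOn.injOn (f₁' := (· ⊓ m)) fun q hq => hsup_inf hq.2
  rw [← ncard_finrank_eq_one_le hm, ← hinj.ncard_image]
  congr 1
  ext l
  constructor
  · rintro ⟨hl, hpl⟩
    refine ⟨l ⊓ m, ⟨finrank_inf_eq_one hV hl hm fun h => hp_le hpl h.le, inf_le_right⟩, ?_⟩
    simp only
    rw [inf_sup_assoc_of_le m hpl, sup_comm, hpm.sup_eq_top, inf_top_eq]
  · rintro ⟨q, ⟨hq, hqm⟩, rfl⟩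
    exact ⟨finrank_sup_eq_two hq hp fun h => hp_le h.ge hqm, le_sup_right⟩

end Subspaces

section IncGraph

/-- The bipartition of `IncGraph`: points are `true` and lines are `false`. -/
def incColoring : IncGraph.Coloring Bool :=
  Coloring.mk Sum.isLeft <| by
    rintro (p | l) (q | m) h
    · exact h.elim
    · simp
    · simp
    · exact h.elim

lemma hasUniqueCommonNeighbors_incColoring : HasUniqueCommonNeighbors incColoring := by
  rintro (p | l) (q | m) hne hcolor
  · have hpq : p.1 ≠ q.1 := fun h => hne (congrArg Sum.inl (Subtype.ext h))
    have hrank := finrank_sup_eq_two p.2 q.2 hpq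
    refine ⟨Sum.inr ⟨p.1 ⊔ q.1, hrank⟩, ⟨le_sup_left (a := p.1), le_sup_right (a := p.1)⟩, ?_⟩
    rintro (r | l) ⟨hp, hq⟩
    · exact hp.elim
    · exact congrArg Sum.inr <| Subtype.ext
        (Submodule.eq_of_le_of_finrank_eq (sup_le hp hq) (hrank.trans l.2.symm)).symm
  · cases hcolor
  · cases hcolor
  · have hlm : l.1 ≠ m.1 := fun h => hne (congrArg Sum.inr (Subtype.ext h))
    have hrank := finrank_inf_eq_one (finrank_fin_fun F4) l.2 m.2 hlm
    refine ⟨Sum.inl ⟨l.1 ⊓ m.1, hrank⟩, ⟨inf_le_left (a := l.1), inf_le_right (a := l.1)⟩, ?_⟩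
    rintro (p | k) ⟨hl, hm⟩
    · exact congrArg Sum.inl <| Subtype.ext
        (Submodule.eq_of_le_of_finrank_eq (le_inf hl hm) (p.2.trans hrank.symm))
    · exact hl.elim

lemma neighborSet_incGraph_inl (p : ProjPoint) : IncGraph.neighborSet (Sum.inl p) =
    Sum.inr '' (Subtype.val ⁻¹' {l : Submodule F4 V3 | finrank F4 l = 2 ∧ p.1 ≤ l}) := by
  ext (q | l)
  · simp [IncGraph, IncAdj]
  · simpa [IncGraph, IncAdj] using fun _ => l.2

lemma neighborSet_incGraph_inr (l : ProjLine) : IncGraph.neighborSet (Sum.inr l) =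
    Sum.inl '' (Subtype.val ⁻¹' {p : Submodule F4 V3 | finrank F4 p = 1 ∧ p ≤ l.1}) := by
  ext (p | m)
  · simpa [IncGraph, IncAdj] using fun _ => p.2
  · simp [IncGraph, IncAdj]

lemma degree_incGraph (v : ProjPoint ⊕ ProjLine) [Fintype (IncGraph.neighborSet v)] :
    IncGraph.degree v = 5 := by
  have hcard : Nat.card F4 = 4 := GaloisField.card 2 2 two_ne_zero
  rw [← card_neighborSet_eq_degree, ← Nat.card_eq_fintype_card, Nat.card_coe_set_eq]
  rcases v with p | l
  · rw [neighborSet_incGraph_inl, Set.ncard_image_of_injective _ Sum.inr_injective,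
      Set.ncard_preimage_of_injective_subset_range Subtype.val_injective (by simp +contextual),
      ncard_finrank_eq_two_ge (finrank_fin_fun F4) p.2, hcard]
  · rw [neighborSet_incGraph_inr, Set.ncard_image_of_injective _ Sum.inl_injective,
      Set.ncard_preimage_of_injective_subset_range Subtype.val_injective (by simp +contextual),
      ncard_finrank_eq_one_le l.2, hcard]

end IncGraph

theorem no_induced_DTilde_20_general {V : Type*} {G : SimpleGraph V} [G.LocallyFinite]
    {c : G.Coloring Bool} (hc : HasUniqueCommonNeighbors c) {k n : ℕ}
    (hdeg : ∀ v, G.degree v ≤ k + 4) (heven : Even n) (hn : 2 * (k ^ 2 + k + 7) < n) :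
    ¬ HasInducedCopy (DTilde n) G := by
  classical
  rintro ⟨f, hf, hadj⟩
  let φ : DTilde n ↪g G := ⟨⟨f, hf⟩, hadj _ _⟩
  let x : Fin (n + 1) := ⟨2, by omega⟩
  let y : Fin (n + 1) := ⟨n - 2, by omega⟩
  have hx : x.val = 2 := rfl
  have hy : y.val = n - 2 := rfl
  have hcolor {i : Fin (n + 1)} (hi : 2 ≤ i.val) (hi_even : Even i.val) (hin : i.val + 2 ≤ n) :
      c (φ x) = c (φ i) :=
    dTilde_color_eq_of_even (c.comp φ.toHom) hi hi_even hin
  have hmid : ∀ t ∈ evenMidSpine n, c (φ x) = c (φ t) ∧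
      (DTilde n).commonNeighbors x t = ∅ ∧ (DTilde n).commonNeighbors y t = ∅ := fun t ht => by
    obtain ⟨ht_even, ht6, htn⟩ := mem_evenMidSpine.1 ht
    refine ⟨hcolor (by omega) ht_even (by omega),
      dTilde_commonNeighbors_eq_empty (by omega) (by omega) (by omega), ?_⟩
    rw [commonNeighbors_symm]
    exact dTilde_commonNeighbors_eq_empty (by omega) (by omega) (by omega)
  have hdeg_x := three_le_dTilde_degree_left (by omega) hx
  have hdeg_y := three_le_dTilde_degree_right (by omega) (show y.val + 2 = n by omega)
  have hcard : (evenMidSpine n).card + 2 ≤ k + 4 + k * k :=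
    hc.card_add_two_le φ (by grind) (hcolor (by omega) (by grind) (by omega))
      (dTilde_commonNeighbors_eq_empty (by omega) (by omega) (by omega))
      (by grind [mem_evenMidSpine]) (by grind [mem_evenMidSpine]) hmid hdeg
      ((hdeg _).trans (by omega)) ((hdeg _).trans (by omega))
  have := le_card_evenMidSpine n
  grind

/-- The incidence graph of `ℙ²(𝔽₄)` contains no induced subgraph isomorphic to `D̃₂₀`. -/
theorem no_induced_DTilde_20 : ¬ HasInducedCopy (DTilde 20) IncGraph := by
  have : IncGraph.LocallyFinite := fun _ => Fintype.ofFinite _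
  exact no_induced_DTilde_20_general hasUniqueCommonNeighbors_incColoring (k := 1)
    (fun v => (degree_incGraph v).le) (by decide) (by norm_num)
end

section
/- For every m ∈ {4, 5, 6, 7, 8, 10, 12, 16}, the incidence graph of points and lines of ℙ²(𝔽₄) contains an induced subgraph isomorphic to the extended Dynkin diagram D̃ₘ. -/
/-!
A cyclic group of order 21 acts regularly on the points and on the lines of `ℙ²(𝔽₄)` (a Singer
cycle), so both can be labelled by `ℤ/21` in such a way that the point `i` lies on the line `j` iff
`i + j` belongs to the perfect difference set `{0, 1, 4, 14, 16}`. In these labels one checks that a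
single sequence `x₀, …, x₁₅` of vertices spans an induced Dynkin diagram `D₁₆`. Its first `m`
members span `Dₘ`, and for each of the given `m` there is a vertex whose only neighbour among
them is `xₘ₋₂`; adding it turns `Dₘ` into `D̃ₘ`.
-/

open SimpleGraph Matrix QuadraticAlgebra

theorem hasInducedCopy_iff_isIndContained {α β : Type*} {H : SimpleGraph α} {G : SimpleGraph β} :
    HasInducedCopy H G ↔ H ⊴ G :=
  ⟨fun ⟨f, hf, hadj⟩ => ⟨⟨⟨f, hf⟩, hadj _ _⟩⟩,
    fun ⟨e⟩ => ⟨e, e.injective, fun _ _ => e.map_adj_iff⟩⟩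

section BipartiteGraph

variable {α β γ δ : Type*}

/-- The bipartite graph on `α ⊕ β` whose edges are the pairs related by `r`. -/
def bipartiteGraph (r : α → β → Prop) : SimpleGraph (α ⊕ β) where
  Adj
    | .inl a, .inr b => r a b
    | .inr b, .inl a => r a b
    | _, _ => False
  symm := ⟨by rintro (_ | _) (_ | _) h <;> exact h⟩
  loopless := ⟨by rintro (_ | _) h <;> exact h⟩

instance (r : α → β → Prop) [∀ a b, Decidable (r a b)] : DecidableRel (bipartiteGraph r).Adj
  | .inl a, .inr b => inferInstanceAs (Decidable (r a b))
  | .inr b, .inl a => inferInstanceAs (Decidable (r a b))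
  | .inl _, .inl _ => .isFalse id
  | .inr _, .inr _ => .isFalse id

theorem incGraph_eq_bipartiteGraph :
    IncGraph = bipartiteGraph fun (P : ProjPoint) (L : ProjLine) => P.1 ≤ L.1 := by
  ext (_ | _) (_ | _) <;> rfl

theorem injective_of_rel_iff {r : α → β → Prop} {s : γ → δ → Prop} {f : α → γ} {g : β → δ}
    (h : ∀ a b, s (f a) (g b) ↔ r a b) (hr : Function.Injective r) : Function.Injective f :=
  fun a a₂ heq => hr <| funext fun b => propext <| by rw [← h, ← h, heq]

theorem bipartiteGraph_isIndContained {r : α → β → Prop} {s : γ → δ → Prop}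
    (f : α → γ) (g : β → δ) (h : ∀ a b, s (f a) (g b) ↔ r a b)
    (hr : Function.Injective r) (hr_flip : Function.Injective (flip r)) :
    bipartiteGraph r ⊴ bipartiteGraph s :=
  ⟨{ toFun := Sum.map f g
     inj' := (injective_of_rel_iff h hr).sumMap
      (injective_of_rel_iff (s := flip s) (fun b a => h a b) hr_flip)
     map_rel_iff' := by rintro (a | b) (a₂ | b₂) <;> first | exact h _ _ | exact Iff.rfl }⟩

end BipartiteGraph

/-- The point of `ℙ²(𝔽₄)` with homogeneous coordinates `v`. -/
noncomputable def pointOfCoord (v : V3) (hv : v ≠ 0) : ProjPoint :=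
  ⟨F4 ∙ v, finrank_span_singleton hv⟩

theorem finrank_ker_dotProductEquiv_add_one {K ι : Type*} [Field K] [Fintype ι] [DecidableEq ι]
    {φ : ι → K} (hφ : φ ≠ 0) :
    Module.finrank K (LinearMap.ker (dotProductEquiv K ι φ)) + 1 = Fintype.card ι := by
  have functional_ne_zero : dotProductEquiv K ι φ ≠ 0 :=
    (map_ne_zero_iff _ (LinearEquiv.injective _)).2 hφ
  rw [Module.Dual.finrank_ker_add_one_of_ne_zero functional_ne_zero,
    Module.finrank_fintype_fun_eq_card]

/-- The line of `ℙ²(𝔽₄)` with equation `φ ⬝ᵥ x = 0`. -/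
noncomputable def lineOfCoord (φ : V3) (hφ : φ ≠ 0) : ProjLine :=
  ⟨LinearMap.ker (dotProductEquiv F4 (Fin 3) φ),
    Nat.succ_injective (finrank_ker_dotProductEquiv_add_one hφ)⟩

theorem pointOfCoord_le_lineOfCoord_iff {v φ : V3} (hv : v ≠ 0) (hφ : φ ≠ 0) :
    (pointOfCoord v hv).1 ≤ (lineOfCoord φ hφ).1 ↔ φ ⬝ᵥ v = 0 :=
  Submodule.span_singleton_le_iff_mem _ _

theorem bipartiteGraph_isIndContained_incGraph {α β K : Type*} [Field K] (ψ : K →+* F4)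
    {r : α → β → Prop} {v : α → Fin 3 → K} {φ : β → Fin 3 → K}
    (hv : ∀ a, v a ≠ 0) (hφ : ∀ b, φ b ≠ 0) (h : ∀ a b, φ b ⬝ᵥ v a = 0 ↔ r a b)
    (hr : Function.Injective r) (hr_flip : Function.Injective (flip r)) :
    bipartiteGraph r ⊴ IncGraph := by
  have map_ne_zero {u : Fin 3 → K} (hu : u ≠ 0) : ψ ∘ u ≠ 0 := fun h0 =>
    hu <| funext fun i => (map_eq_zero ψ).1 (congrFun h0 i)
  rw [incGraph_eq_bipartiteGraph]
  refine bipartiteGraph_isIndContained (fun a => pointOfCoord (ψ ∘ v a) (map_ne_zero (hv a)))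
    (fun b => lineOfCoord (ψ ∘ φ b) (map_ne_zero (hφ b))) (fun a b => ?_) hr hr_flip
  rw [pointOfCoord_le_lineOfCoord_iff, ← RingHom.map_dotProduct, map_eq_zero, h]

/-- The field with four elements presented as `(ℤ/2)[ω]` with `ω² = 1 + ω`. Unlike
`GaloisField 2 2` it has computable operations and decidable equality. -/
abbrev QuadraticF4 : Type := QuadraticAlgebra (ZMod 2) 1 1

instance fact_sq_ne_one_add_self : Fact (∀ r : ZMod 2, r ^ 2 ≠ 1 + 1 * r) := ⟨by decide⟩

theorem card_quadraticAlgebra {R : Type*} (a b : R) :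
    Nat.card (QuadraticAlgebra R a b) = Nat.card R ^ 2 := by
  rw [Nat.card_congr (QuadraticAlgebra.equivProd a b), Nat.card_prod, sq]

theorem nonempty_ringEquiv_of_natCard_eq {K L : Type*} [Field K] [Field L] [Finite K] [Finite L]
    (h : Nat.card K = Nat.card L) : Nonempty (K ≃+* L) := by
  have := Fintype.ofFinite K
  have := Fintype.ofFinite L
  exact ⟨FiniteField.ringEquivOfCardEq (by simpa only [Nat.card_eq_fintype_card] using h)⟩

theorem nonempty_quadraticF4_ringEquiv_f4 : Nonempty (QuadraticF4 ≃+* F4) := by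
  have : Finite QuadraticF4 := .of_equiv _ (QuadraticAlgebra.equivProd 1 1).symm
  refine nonempty_ringEquiv_of_natCard_eq ?_
  rw [card_quadraticAlgebra, Nat.card_zmod, GaloisField.card 2 2 two_ne_zero]

theorem vecMul_pow_dotProduct_pow_mulVec {R ι : Type*} [Semiring R] [Fintype ι] [DecidableEq ι]
    (C : Matrix ι ι R) (φ v : ι → R) (i j : ℕ) :
    φ ᵥ* C ^ j ⬝ᵥ C ^ i *ᵥ v = φ ⬝ᵥ C ^ (i + j) *ᵥ v := by
  rw [← dotProduct_mulVec, mulVec_mulVec, ← pow_add, add_comm]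

/-- The companion matrix of `X³ + X² + X + ω`, the minimal polynomial over `𝔽₄` of a generator of
`𝔽₆₄ˣ`. As `𝔽₆₄ˣ / 𝔽₄ˣ` has order 21, its powers permute the points of `ℙ²(𝔽₄)` in one cycle. -/
def singerMatrix : Matrix (Fin 3) (Fin 3) QuadraticF4 :=
  !![0, 1, 0; 0, 0, 1; ω, 1, 1]

/-- A perfect difference set modulo 21: each nonzero residue is a difference of two of its elements
in exactly one way. -/
def singerSet : Finset (ZMod 21) := {0, 1, 4, 14, 16}

/-- The incidence graph of the cyclic projective plane given by `singerSet`. -/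
abbrev singerGraph : SimpleGraph (ZMod 21 ⊕ ZMod 21) :=
  bipartiteGraph fun i j => i + j ∈ singerSet

theorem singerMatrix_pow_entry_eq_zero_iff :
    ∀ k < (41 : ℕ),
      ![1, 0, 0] ⬝ᵥ singerMatrix ^ k *ᵥ ![0, 0, 1] = 0 ↔ (k : ZMod 21) ∈ singerSet := by
  decide +kernel

theorem injective_add_mem_singerSet :
    Function.Injective fun i j : ZMod 21 => i + j ∈ singerSet := by
  have eq_of_forall_iff : ∀ i i₂ : ZMod 21,
      (∀ j, i + j ∈ singerSet ↔ i₂ + j ∈ singerSet) → i = i₂ := by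
    decide +kernel
  exact fun i i₂ h => eq_of_forall_iff i i₂ fun j => iff_of_eq (congrFun h j)

theorem exists_add_notMem_singerSet : ∀ i : ZMod 21, ∃ j, i + j ∉ singerSet := by
  decide

theorem singerGraph_isIndContained_incGraph : singerGraph ⊴ IncGraph := by
  obtain ⟨ψ⟩ := nonempty_quadraticF4_ringEquiv_f4
  let v (i : ZMod 21) := singerMatrix ^ i.val *ᵥ ![0, 0, 1]
  let φ (j : ZMod 21) := ![1, 0, 0] ᵥ* singerMatrix ^ j.val
  have incident_iff (i j : ZMod 21) : φ j ⬝ᵥ v i = 0 ↔ i + j ∈ singerSet := by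
    have hi := i.val_lt
    have hj := j.val_lt
    rw [vecMul_pow_dotProduct_pow_mulVec, singerMatrix_pow_entry_eq_zero_iff _ (by lia),
      Nat.cast_add, ZMod.natCast_zmod_val, ZMod.natCast_zmod_val]
  have v_ne_zero (i) : v i ≠ 0 := fun hi => by
    obtain ⟨j, hj⟩ := exists_add_notMem_singerSet i
    exact hj ((incident_iff i j).1 (by rw [hi, dotProduct_zero]))
  have φ_ne_zero (j) : φ j ≠ 0 := fun hj => by
    obtain ⟨i, hi⟩ := exists_add_notMem_singerSet j
    exact hi (add_comm i j ▸ (incident_iff i j).1 (by rw [hj, zero_dotProduct]))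
  have flip_eq : (flip fun i j => i + j ∈ singerSet) = fun i j => i + j ∈ singerSet := by
    ext i j
    rw [flip, add_comm]
  exact bipartiteGraph_isIndContained_incGraph (ψ : QuadraticF4 →+* F4) v_ne_zero φ_ne_zero
    incident_iff injective_add_mem_singerSet (flip_eq ▸ injective_add_mem_singerSet)

/-- The Dynkin diagram `Dₙ` on `{0, …, n - 1}`: the path `2, 3, …, n - 1` with the two leaves
`0` and `1` attached to `2`. Thus each vertex `i` is joined to `max 2 (i + 1)`. -/
abbrev dynkinD (n : ℕ) : SimpleGraph (Fin n) :=
  .fromRel fun i j => (j : ℕ) = max 2 ((i : ℕ) + 1)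

/-- The inclusion of `Dₘ` into `Dₙ` as the subdiagram on the first `m` vertices. -/
def dynkinDCastLE {m n : ℕ} (h : m ≤ n) : dynkinD m ↪g dynkinD n :=
  ⟨Fin.castLEEmb h, by simp⟩

theorem dTAdj_iff_eq_max {m a b : ℕ} (hm : 3 ≤ m) (hb : b < m) :
    DTAdj m a b ↔ b = max 2 (a + 1) := by
  unfold DTAdj
  omega

theorem dTilde_adj_castSucc_castSucc {m : ℕ} (hm : 3 ≤ m) {i j : Fin m} :
    (DTilde m).Adj i.castSucc j.castSucc ↔ (dynkinD m).Adj i j := by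
  simp only [DTilde, fromRel_adj, ne_eq, Fin.castSucc_inj, Fin.val_castSucc,
    dTAdj_iff_eq_max hm i.isLt, dTAdj_iff_eq_max hm j.isLt]

theorem dTilde_adj_castSucc_last {m : ℕ} (hm : 3 ≤ m) {i : Fin m} :
    (DTilde m).Adj i.castSucc (Fin.last m) ↔ (i : ℕ) + 2 = m := by
  simp only [DTilde, DTAdj, ne_eq, Fin.ext_iff, Fin.val_castSucc, Fin.val_last]
  lia

theorem dTilde_isIndContained_of_leaf {V : Type*} {G : SimpleGraph V} {m : ℕ} (hm : 3 ≤ m)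
    (e : dynkinD m ↪g G) {y : V} (hy : ∀ i, e i ≠ y)
    (hadj : ∀ i, G.Adj (e i) y ↔ (i : ℕ) + 2 = m) : DTilde m ⊴ G := by
  refine ⟨⟨⟨Fin.snoc e y, Fin.snoc_injective_iff.2 ⟨e.injective, fun ⟨i, hi⟩ => hy i hi⟩⟩, ?_⟩⟩
  intro a b
  cases a using Fin.lastCases with
  | last =>
    cases b using Fin.lastCases with
    | last => simp
    | cast j => simp [adj_comm _ (Fin.last m), adj_comm _ y, dTilde_adj_castSucc_last hm, hadj]
  | cast i =>
    cases b using Fin.lastCases with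
    | last => simp [dTilde_adj_castSucc_last hm, hadj]
    | cast j => simp [dTilde_adj_castSucc_castSucc hm, -fromRel_adj]

/-- A sequence of vertices of the cyclic plane spanning an induced `D₁₆`; the points are `.inl i`
and the lines are `.inr j`. -/
def singerD16 : Fin 16 → ZMod 21 ⊕ ZMod 21 :=
  ![.inl 0, .inl 1, .inr 0, .inl 4, .inr 17, .inl 5, .inr 9, .inl 12,
    .inr 2, .inl 19, .inr 6, .inl 15, .inr 7, .inl 9, .inr 5, .inl 17]

theorem singerD16_injective : Function.Injective singerD16 := by
  decide +kernel

theorem singerGraph_adj_singerD16_iff :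
    ∀ i j, singerGraph.Adj (singerD16 i) (singerD16 j) ↔ (dynkinD 16).Adj i j := by
  decide +kernel

theorem exists_leaf_singerD16 :
    ∀ m ∈ ({4, 5, 6, 7, 8, 10, 12, 16} : Finset ℕ), ∃ y, ∀ i : Fin 16, (i : ℕ) < m →
      singerD16 i ≠ y ∧ (singerGraph.Adj (singerD16 i) y ↔ (i : ℕ) + 2 = m) := by
  decide +kernel

theorem dTilde_isIndContained_singerGraph {m : ℕ}
    (hm : m ∈ ({4, 5, 6, 7, 8, 10, 12, 16} : Finset ℕ)) : DTilde m ⊴ singerGraph := by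
  obtain ⟨hm3, hm16⟩ : 3 ≤ m ∧ m ≤ 16 := by
    simp only [Finset.mem_insert, Finset.mem_singleton] at hm
    lia
  obtain ⟨y, hy⟩ := exists_leaf_singerD16 m hm
  let e : dynkinD 16 ↪g singerGraph :=
    ⟨⟨singerD16, singerD16_injective⟩, singerGraph_adj_singerD16_iff _ _⟩
  exact dTilde_isIndContained_of_leaf hm3 (e.comp (dynkinDCastLE hm16))
    (fun i => (hy (i.castLE hm16) i.isLt).1) (fun i => (hy (i.castLE hm16) i.isLt).2)

/-- For every `m ∈ {4, 5, 6, 7, 8, 10, 12, 16}`, the incidence graph of `ℙ²(𝔽₄)`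
contains an induced subgraph isomorphic to `D̃ₘ`. -/
theorem exists_induced_DTilde :
    ∀ m ∈ ({4, 5, 6, 7, 8, 10, 12, 16} : Set ℕ), HasInducedCopy (DTilde m) IncGraph := by
  intro m hm
  rw [hasInducedCopy_iff_isIndContained]
  exact (dTilde_isIndContained_singerGraph (by simpa using hm)).trans
    singerGraph_isIndContained_incGraph
end

section
/- On the Weierstrass curve W : y² + t²xy + y = x³ over the rational function field F = 𝔽₂(t), the point (t, 1) is a nonsingular point of order exactly 6 in the group of points of W. -/
/-- The rational function field `F = 𝔽₂(t)`. -/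
noncomputable abbrev F : Type := RatFunc (ZMod 2)

/-- The variable `t` of `𝔽₂(t)`. -/
noncomputable def t : F := RatFunc.X

/-- The Weierstrass curve `W : y² + t²xy + y = x³` over `𝔽₂(t)`. -/
noncomputable def W : WeierstrassCurve.Affine F :=
  { a₁ := t ^ 2, a₂ := 0, a₃ := 1, a₄ := 0, a₆ := 0 }

/-!
On `y² + s²xy + y = x³` in characteristic two, the line `y = 1` cuts out `x³ = s²x`, that is
`x(x - s)² = 0`. It is therefore tangent at `P = (s, 1)` and passes through `(0, 1) = -(0, 0)`,
so `2P = (0, 0)`. The origin is a flex with tangent `y = 0`, hence has order three, and `3P ≠ 0`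
because `P` and `2P` have different `x`-coordinates.
-/

open WeierstrassCurve.Affine

theorem addOrderOf_eq_prime_mul_of_addOrderOf_nsmul {G : Type*} [AddMonoid G] {x : G} {p m : ℕ}
    (hp : p.Prime) (horder : addOrderOf (p • x) = m) (hm : m • x ≠ 0) :
    addOrderOf x = p * m := by
  rw [addOrderOf_nsmul' x hp.ne_zero] at horder
  rcases (Nat.dvd_prime hp).mp (Nat.gcd_dvd_right (addOrderOf x) p) with hgcd | hgcd
  · rw [hgcd, Nat.div_one] at horder
    exact absurd (horder ▸ addOrderOf_nsmul_eq_zero x) hm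
  · rw [hgcd] at horder
    rw [← horder, Nat.mul_div_cancel' (Nat.gcd_eq_right_iff_dvd.mp hgcd)]

theorem pow_ne_one_of_transcendental {R A : Type*} [CommRing R] [Nontrivial R] [Ring A]
    [Algebra R A] {x : A} (hx : Transcendental R x) {n : ℕ} (hn : 0 < n) : x ^ n ≠ 1 :=
  fun h ↦ hx.pow hn (h ▸ isAlgebraic_one)

section Flex

variable {K : Type*} [Field K] [DecidableEq K] {E : WeierstrassCurve.Affine K}

theorem origin_add_self_eq_neg (ha₂ : E.a₂ = 0) (ha₄ : E.a₄ = 0) (h : E.Nonsingular 0 0) :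
    Point.some 0 0 h + Point.some 0 0 h = -Point.some 0 0 h := by
  have ha₃ : E.a₃ ≠ 0 := by simpa [ha₄] using (nonsingular_zero.mp h).2
  have hy : (0 : K) ≠ E.negY 0 0 := by simpa [negY] using ha₃
  have hslope : E.slope 0 0 0 0 = 0 := by simp [slope_of_Y_ne rfl hy, ha₄]
  rw [Point.add_self_of_Y_ne hy, Point.neg_some, Point.some.injEq, hslope]
  simp [addX, addY, negAddY, negY, ha₂]

theorem addOrderOf_origin_eq_three (ha₂ : E.a₂ = 0) (ha₄ : E.a₄ = 0) (h : E.Nonsingular 0 0) :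
    addOrderOf (Point.some 0 0 h) = 3 := by
  refine addOrderOf_eq_prime ?_ (Point.some_ne_zero h)
  rw [succ_nsmul, two_nsmul, origin_add_self_eq_neg ha₂ ha₄, neg_add_cancel]

end Flex

/-- The curve `y² + s²xy + y = x³`, which is `W` for `s = t`; in characteristic two it contains
the point `(s, 1)`, of order six for all but finitely many `s`. -/
def orderSixCurve {K : Type*} [Field K] (s : K) : WeierstrassCurve.Affine K :=
  { a₁ := s ^ 2, a₂ := 0, a₃ := 1, a₄ := 0, a₆ := 0 }

namespace orderSixCurve

variable {K : Type*} [Field K] {s : K}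

theorem nonsingular_origin (s : K) : (orderSixCurve s).Nonsingular 0 0 := by
  simp [nonsingular_zero, orderSixCurve]

variable [CharP K 2]

theorem equation_s_one (s : K) : (orderSixCurve s).Equation s 1 := by
  simp only [equation_iff, orderSixCurve]
  linear_combination CharTwo.two_eq_zero (R := K)

theorem one_ne_negY (hs : s ^ 3 ≠ 1) : 1 ≠ (orderSixCurve s).negY s 1 := by
  simp only [negY, orderSixCurve]
  intro h
  apply hs
  linear_combination h - 2 * CharTwo.two_eq_zero (R := K)

theorem nonsingular_s_one (hs : s ^ 3 ≠ 1) : (orderSixCurve s).Nonsingular s 1 :=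
  (nonsingular_iff _ _).mpr ⟨equation_s_one s, Or.inr (one_ne_negY hs)⟩

variable [DecidableEq K]

theorem slope_s_one (hs : s ^ 3 ≠ 1) : (orderSixCurve s).slope s s 1 1 = 0 := by
  rw [slope_of_Y_ne rfl (one_ne_negY hs), div_eq_zero_iff]
  left
  simp only [orderSixCurve]
  linear_combination s ^ 2 * CharTwo.two_eq_zero (R := K)

theorem two_nsmul_s_one (hs : s ^ 3 ≠ 1) :
    2 • Point.some s 1 (nonsingular_s_one hs) = Point.some 0 0 (nonsingular_origin s) := by
  have hX : (orderSixCurve s).addX s s 0 = 0 := by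
    simp [addX, orderSixCurve, CharTwo.sub_eq_add, CharTwo.add_self_eq_zero]
  have hY : (orderSixCurve s).addY s s 1 0 = 0 := by
    rw [addY, negAddY, hX]
    simp [negY, orderSixCurve, CharTwo.sub_eq_add, CharTwo.neg_eq]
  rw [two_nsmul, Point.add_self_of_Y_ne (one_ne_negY hs), Point.some.injEq, slope_s_one hs]
  exact ⟨hX, hY⟩

theorem three_nsmul_s_one_ne_zero (hs₀ : s ≠ 0) (hs : s ^ 3 ≠ 1) :
    3 • Point.some s 1 (nonsingular_s_one hs) ≠ 0 := by
  rw [succ_nsmul, two_nsmul_s_one hs, Ne, add_eq_zero_iff_eq_neg, Point.neg_some,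
    Point.some.injEq]
  exact fun h ↦ hs₀ h.1.symm

end orderSixCurve

theorem point_t_one_has_order_six_general {K : Type*} [Field K] [CharP K 2] [DecidableEq K]
    {s : K} (hs₀ : s ≠ 0) (hs : s ^ 3 ≠ 1) :
    ∃ h : (orderSixCurve s).Nonsingular s 1, addOrderOf (Point.some s 1 h) = 6 := by
  refine ⟨orderSixCurve.nonsingular_s_one hs,
    addOrderOf_eq_prime_mul_of_addOrderOf_nsmul Nat.prime_two ?_
      (orderSixCurve.three_nsmul_s_one_ne_zero hs₀ hs)⟩
  rw [orderSixCurve.two_nsmul_s_one hs]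
  exact addOrderOf_origin_eq_three rfl rfl _

open scoped Classical in
/-- On `W : y² + t²xy + y = x³` over `𝔽₂(t)`, the point `(t, 1)` is a nonsingular point
of order exactly 6 in the group of points of `W`. -/
theorem point_t_one_has_order_six :
    ∃ h : W.Nonsingular t 1, addOrderOf (WeierstrassCurve.Affine.Point.some t 1 h) = 6 :=
  point_t_one_has_order_six_general RatFunc.X_ne_zero
    (pow_ne_one_of_transcendental RatFunc.transcendental_X three_pos)
end

section
/- On the Weierstrass curve W : y² + t²xy + y = x³ over the rational function field F = 𝔽₂(t), the point (1/t², 1/t³) is a nonsingular point of order exactly 2 in the group of points of W. -/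
section CommRing

variable {R : Type*} [CommRing R] (E : WeierstrassCurve.Affine R)

theorem nonsingular_iff_of_eq_negY {x y : R} (hy : y = E.negY x y) :
    E.Nonsingular x y ↔
      E.Equation x y ∧ E.a₁ * y ≠ 3 * x ^ 2 + 2 * E.a₂ * x + E.a₄ := by
  rw [WeierstrassCurve.Affine.nonsingular_iff, ← WeierstrassCurve.Affine.negY,
    or_iff_left (not_not_intro hy)]

theorem eq_negY_iff_of_charTwo [CharP R 2] (x y : R) :
    y = E.negY x y ↔ E.a₁ * x + E.a₃ = 0 := by
  simp only [WeierstrassCurve.Affine.negY, CharTwo.sub_eq_add, CharTwo.neg_eq, add_assoc,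
    left_eq_add]

end CommRing

theorem addOrderOf_some_eq_two_iff {K : Type*} [Field K] [DecidableEq K]
    {E : WeierstrassCurve.Affine K} {x y : K} (h : E.Nonsingular x y) :
    addOrderOf (WeierstrassCurve.Affine.Point.some x y h) = 2 ↔ y = E.negY x y := by
  rw [addOrderOf_eq_prime_iff, and_iff_left (WeierstrassCurve.Affine.Point.some_ne_zero h),
    two_nsmul, add_eq_zero_iff_eq_neg, WeierstrassCurve.Affine.Point.neg_some,
    WeierstrassCurve.Affine.Point.some.injEq, and_iff_right rfl]

theorem ratFunc_X_pow_ne_one (K : Type*) [Field K] {n : ℕ} (hn : 0 < n) :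
    (RatFunc.X : RatFunc K) ^ n ≠ 1 := fun h =>
  RatFunc.transcendental_X.pow hn (h ▸ isAlgebraic_one)

/-- The Weierstrass curve `y² + s²xy + y = x³`, the family of which `W` is the member `s = t`. -/
def curveWithParameter {R : Type*} [CommRing R] (s : R) : WeierstrassCurve.Affine R :=
  { a₁ := s ^ 2, a₂ := 0, a₃ := 1, a₄ := 0, a₆ := 0 }

namespace curveWithParameter

variable {K : Type*} [Field K] [CharP K 2] {s : K}

theorem equation_inv (hs : s ≠ 0) :
    (curveWithParameter s).Equation (1 / s ^ 2) (1 / s ^ 3) := by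
  rw [WeierstrassCurve.Affine.equation_iff]
  simp only [curveWithParameter]
  field_simp
  linear_combination s ^ 3 * CharTwo.two_eq_zero (R := K)

theorem inv_eq_negY (hs : s ≠ 0) :
    1 / s ^ 3 = (curveWithParameter s).negY (1 / s ^ 2) (1 / s ^ 3) := by
  rw [eq_negY_iff_of_charTwo]
  simp only [curveWithParameter]
  rw [mul_one_div_cancel (pow_ne_zero 2 hs), CharTwo.add_self_eq_zero]

theorem nonsingular_inv_iff (hs : s ≠ 0) :
    (curveWithParameter s).Nonsingular (1 / s ^ 2) (1 / s ^ 3) ↔ s ^ 3 ≠ 1 := by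
  have three_eq_one : (3 : K) = 1 := by
    rw [CharTwo.ofNat_eq_mod 3, Nat.cast_one]
  rw [nonsingular_iff_of_eq_negY _ (inv_eq_negY hs), and_iff_right (equation_inv hs), not_iff_not]
  simp only [curveWithParameter, three_eq_one, mul_zero, zero_mul, add_zero]
  field_simp

end curveWithParameter

theorem point_inv_has_order_two_general {K : Type*} [Field K] [CharP K 2] [DecidableEq K] {s : K}
    (hs : s ≠ 0) (hs_cube : s ^ 3 ≠ 1) :
    ∃ h : (curveWithParameter s).Nonsingular (1 / s ^ 2) (1 / s ^ 3),
      addOrderOf (WeierstrassCurve.Affine.Point.some _ _ h) = 2 :=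
  ⟨(curveWithParameter.nonsingular_inv_iff hs).mpr hs_cube,
    (addOrderOf_some_eq_two_iff _).mpr (curveWithParameter.inv_eq_negY hs)⟩

open scoped Classical in
/-- On `W : y² + t²xy + y = x³` over `𝔽₂(t)`, the point `(1/t², 1/t³)` is a nonsingular
point of order exactly 2 in the group of points of `W`. -/
theorem point_inv_has_order_two :
    ∃ h : W.Nonsingular (1 / t ^ 2) (1 / t ^ 3),
      addOrderOf (WeierstrassCurve.Affine.Point.some _ _ h) = 2 :=
  point_inv_has_order_two_general RatFunc.X_ne_zero (ratFunc_X_pow_ne_one (ZMod 2) three_pos)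
end
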